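/- Fix α > 0 and δ ∈ (0,1). Under assumptions (A1)–(A6), with probability at least 1−δ over the draw of the datasets D and D0, the output (ŵ, π̂) of PRO-RL satisfies J(π*_α) − J(π̂) ≤ (1/(1−γ))·E_{s∼d*_α}[‖π*_α(·|s) − π̂(·|s)‖₁] ≤ (2/(1−γ))·‖ŵ − w*_α‖_{2,d^D} ≤ (4/(1−γ))·√(ε_stat/(α·M_f)). -/

import Mathlib

open MeasureTheory
open scoped BigOperators ENNReal

namespace ProRL

/-- The discrete measure on a type induced by a real-valued weight function. -/
noncomputable def discMeasure {X : Type*} [MeasurableSpace X] (p : X → ℝ) : Measure X :=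
  Measure.sum fun x => ENNReal.ofReal (p x) • Measure.dirac x

variable {S A : Type*} [Fintype S] [Fintype A]

/-- The `t`-step state-action distribution of policy `π` started from `μ0`. -/
noncomputable def saDist (P : S → A → S → ℝ) (μ0 : S → ℝ) (π : S → A → ℝ) :
    ℕ → S → A → ℝ
  | 0 => fun s a => μ0 s * π s a
  | t + 1 => fun s a =>
      (∑ s' : S, ∑ a' : A, saDist P μ0 π t s' a' * P s' a' s) * π s a

/-- The discounted state-action occupancy `d^π(s,a)`. -/
noncomputable def occ (P : S → A → S → ℝ) (μ0 : S → ℝ) (γ : ℝ) (π : S → A → ℝ)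
    (s : S) (a : A) : ℝ :=
  (1 - γ) * ∑' t : ℕ, γ ^ t * saDist P μ0 π t s a

/-- The (normalized) expected discounted return `J(π) = E_{d^π}[r]`. -/
noncomputable def Jret (P : S → A → S → ℝ) (r : S → A → ℝ) (μ0 : S → ℝ) (γ : ℝ)
    (π : S → A → ℝ) : ℝ :=
  ∑ s : S, ∑ a : A, occ P μ0 γ π s a * r s a

/-- `π` is a (stationary, stochastic) policy. -/
def IsPolicy (π : S → A → ℝ) : Prop :=
  (∀ s a, 0 ≤ π s a) ∧ ∀ s, ∑ a : A, π s a = 1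

/-- The Bellman residual `e_v(s,a) = r(s,a) + γ ∑_{s'} P(s'|s,a) v(s') − v(s)`. -/
noncomputable def eV (P : S → A → S → ℝ) (r : S → A → ℝ) (γ : ℝ) (v : S → ℝ)
    (s : S) (a : A) : ℝ :=
  r s a + γ * ∑ s' : S, P s a s' * v s' - v s

/-- The population Lagrangian `L_α(v,w)`. -/
noncomputable def Lag (P : S → A → S → ℝ) (r : S → A → ℝ) (μ0 : S → ℝ) (γ : ℝ)
    (dD : S → A → ℝ) (f : ℝ → ℝ) (α : ℝ) (v : S → ℝ) (w : S → A → ℝ) : ℝ :=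
  (1 - γ) * ∑ s : S, μ0 s * v s
    - α * ∑ s : S, ∑ a : A, dD s a * f (w s a)
    + ∑ s : S, ∑ a : A, dD s a * (w s a * eV P r γ v s a)

/-- The empirical Lagrangian `L̂_α(v,w)` built from the transition dataset `D`
(`D i = ((sᵢ,aᵢ), s'ᵢ)`, with `rᵢ = r sᵢ aᵢ`) and initial-state dataset `D0`. -/
noncomputable def empLag (r : S → A → ℝ) (γ : ℝ) (f : ℝ → ℝ) (α : ℝ) {n n0 : ℕ}
    (D : Fin n → (S × A) × S) (D0 : Fin n0 → S) (v : S → ℝ) (w : S → A → ℝ) : ℝ :=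
  (1 - γ) * ((n0 : ℝ)⁻¹ * ∑ j : Fin n0, v (D0 j))
    - α * ((n : ℝ)⁻¹ * ∑ i : Fin n, f (w (D i).1.1 (D i).1.2))
    + (n : ℝ)⁻¹ * ∑ i : Fin n,
        w (D i).1.1 (D i).1.2 *
          (r (D i).1.1 (D i).1.2 + γ * v (D i).2 - v (D i).1.1)

/-- Per-state normalization of a state-action weight into a policy
(uniform where the state marginal is not positive). -/
noncomputable def normPolicy (d : S → A → ℝ) (s : S) (a : A) : ℝ :=
  if 0 < ∑ a' : A, d s a' then d s a / ∑ a' : A, d s a'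
  else (Fintype.card A : ℝ)⁻¹

/-- Policy extraction from a density ratio `w` and a behavior policy `piD`
(uniform where the normalizer vanishes). -/
noncomputable def extractPolicy (piD w : S → A → ℝ) (s : S) (a : A) : ℝ :=
  if 0 < ∑ a' : A, w s a' * piD s a' then
    w s a * piD s a / ∑ a' : A, w s a' * piD s a'
  else (Fintype.card A : ℝ)⁻¹

/-- Behavior policy `π_D(a|s)` obtained from the data distribution `d^D`. -/
noncomputable def behPolicy (dD : S → A → ℝ) : S → A → ℝ := normPolicy dD

/-- The state-action measure `d(s,a) = w(s,a)·d^D(s,a)`. -/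
noncomputable def dstar (dD w : S → A → ℝ) : S → A → ℝ := fun s a => w s a * dD s a

/-- The weighted `L²(d^D)` norm of a state-action function. -/
noncomputable def l2nrm (dD g : S → A → ℝ) : ℝ :=
  Real.sqrt (∑ s : S, ∑ a : A, dD s a * g s a ^ 2)

/-- `‖π(·|s) − π'(·|s)‖₁`. -/
noncomputable def l1Pol (π π' : S → A → ℝ) (s : S) : ℝ := ∑ a : A, |π s a - π' s a|

/-- `E_{s ∼ d}[‖π(·|s) − π'(·|s)‖₁]` where `d` is a state-action distribution. -/
noncomputable def expL1 (d π π' : S → A → ℝ) : ℝ :=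
  ∑ s : S, (∑ a : A, d s a) * l1Pol π π' s

/-- The statistical error term `ε_stat`. -/
noncomputable def epsStat (γ α Bv Bf Bw Be δ : ℝ) (nV nW n n0 : ℕ) : ℝ :=
  (1 - γ) * Bv * Real.sqrt (2 * Real.log (4 * (nV : ℝ) / δ) / (n0 : ℝ))
    + (α * Bf + Bw * Be) *
        Real.sqrt (2 * Real.log (4 * ((nV : ℝ) * (nW : ℝ)) / δ) / (n : ℝ))

/-- The Bellman flow equations for a state-action measure `d`. -/
def BellmanFlow (P : S → A → S → ℝ) (μ0 : S → ℝ) (γ : ℝ) (d : S → A → ℝ) : Prop :=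
  ∀ s : S, ∑ a : A, d s a
    = (1 - γ) * μ0 s + γ * ∑ s' : S, ∑ a' : A, P s' a' s * d s' a'

/-- `(v,w)` is a saddle point of `max_{w ≥ 0} min_v L_α(v,w)`. -/
def IsSaddle (P : S → A → S → ℝ) (r : S → A → ℝ) (μ0 : S → ℝ) (γ : ℝ)
    (dD : S → A → ℝ) (f : ℝ → ℝ) (α : ℝ) (v : S → ℝ) (w : S → A → ℝ) : Prop :=
  (∀ s a, 0 ≤ w s a) ∧
  (∀ v' : S → ℝ, Lag P r μ0 γ dD f α v w ≤ Lag P r μ0 γ dD f α v' w) ∧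
  (∀ w' : S → A → ℝ, (∀ s a, 0 ≤ w' s a) →
    Lag P r μ0 γ dD f α v w' ≤ Lag P r μ0 γ dD f α v w)

/-- `(v,w)` is a saddle point of `max_{0 ≤ w ≤ Bw} min_v L_α(v,w)` (constrained LP). -/
def IsSaddleB (P : S → A → S → ℝ) (r : S → A → ℝ) (μ0 : S → ℝ) (γ : ℝ)
    (dD : S → A → ℝ) (f : ℝ → ℝ) (α Bw : ℝ) (v : S → ℝ) (w : S → A → ℝ) : Prop :=
  (∀ s a, 0 ≤ w s a ∧ w s a ≤ Bw) ∧
  (∀ v' : S → ℝ, Lag P r μ0 γ dD f α v w ≤ Lag P r μ0 γ dD f α v' w) ∧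
  (∀ w' : S → A → ℝ, (∀ s a, 0 ≤ w' s a ∧ w' s a ≤ Bw) →
    Lag P r μ0 γ dD f α v w' ≤ Lag P r μ0 γ dD f α v w)

/-- `(vhat, what)` is an exact max-min point of the empirical Lagrangian over `V × W`:
`vhat ∈ argmin_{v ∈ V} L̂(v, what)` and `what ∈ argmax_{w ∈ W} min_{v ∈ V} L̂(v, w)`. -/
def IsProRLOutput (r : S → A → ℝ) (γ : ℝ) (f : ℝ → ℝ) (α : ℝ)
    (V : Finset (S → ℝ)) (W : Finset (S → A → ℝ)) {n n0 : ℕ}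
    (D : Fin n → (S × A) × S) (D0 : Fin n0 → S)
    (vhat : S → ℝ) (what : S → A → ℝ) : Prop :=
  vhat ∈ V ∧ what ∈ W ∧
  (∀ v ∈ V, empLag r γ f α D D0 vhat what ≤ empLag r γ f α D D0 v what) ∧
  ∀ w ∈ W, ∀ vw ∈ V,
    (∀ v ∈ V, empLag r γ f α D D0 vw w ≤ empLag r γ f α D D0 v w) →
      empLag r γ f α D D0 vw w ≤ empLag r γ f α D D0 vhat what

/-- Weight of a transition tuple `((s,a),s')` under `(s,a) ∼ d^D`, `s' ∼ P(·|s,a)`. -/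
noncomputable def tupleWeight (P : S → A → S → ℝ) (dD : S → A → ℝ)
    (x : (S × A) × S) : ℝ :=
  dD x.1.1 x.1.2 * P x.1.1 x.1.2 x.2

/-- The joint law of the transition dataset `D` (i.i.d. from `d^D ⊗ P`) and the
initial-state dataset `D0` (i.i.d. from `μ0`). -/
noncomputable def dataMeasure [MeasurableSpace S] [MeasurableSpace A]
    (P : S → A → S → ℝ) (dD : S → A → ℝ) (μ0 : S → ℝ) (n n0 : ℕ) :
    Measure ((Fin n → (S × A) × S) × (Fin n0 → S)) :=
  (Measure.pi fun _ : Fin n => discMeasure (tupleWeight P dD)).prod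
    (Measure.pi fun _ : Fin n0 => discMeasure μ0)

/-- The joint law of datasets `D1`, `D2` (both i.i.d. from `d^D ⊗ P`) and `D0`
(i.i.d. from `μ0`), used by PRO-RL-BC. -/
noncomputable def dataMeasure3 [MeasurableSpace S] [MeasurableSpace A]
    (P : S → A → S → ℝ) (dD : S → A → ℝ) (μ0 : S → ℝ) (n1 n2 n0 : ℕ) :
    Measure ((Fin n1 → (S × A) × S) × (Fin n2 → (S × A) × S) × (Fin n0 → S)) :=
  (Measure.pi fun _ : Fin n1 => discMeasure (tupleWeight P dD)).prod
    ((Measure.pi fun _ : Fin n2 => discMeasure (tupleWeight P dD)).prod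
      (Measure.pi fun _ : Fin n0 => discMeasure μ0))

/-- `v` is the optimal value function: it satisfies the Bellman optimality equation. -/
def IsOptValue [Nonempty A] (P : S → A → S → ℝ) (r : S → A → ℝ) (γ : ℝ)
    (v : S → ℝ) : Prop :=
  ∀ s : S, v s = Finset.univ.sup' Finset.univ_nonempty
    (fun a : A => r s a + γ * ∑ s' : S, P s a s' * v s')

/-- Basic assumptions on the MDP, the regularizer-free data, and the data distribution. -/
structure MDPAssumptions (P : S → A → S → ℝ) (r : S → A → ℝ) (μ0 : S → ℝ) (γ : ℝ)
    (dD : S → A → ℝ) : Prop where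
  P_nonneg : ∀ s a s', 0 ≤ P s a s'
  P_sum : ∀ s a, ∑ s' : S, P s a s' = 1
  r_nonneg : ∀ s a, 0 ≤ r s a
  r_le_one : ∀ s a, r s a ≤ 1
  γ_nonneg : 0 ≤ γ
  γ_lt_one : γ < 1
  μ0_pos : ∀ s, 0 < μ0 s
  μ0_sum : ∑ s : S, μ0 s = 1
  dD_nonneg : ∀ s a, 0 ≤ dD s a
  dD_sum : ∑ s : S, ∑ a : A, dD s a = 1

/-- Regularity of the regularizer `f`: continuously differentiable with derivative `f'`,
`M_f`-strongly convex, and with `|f'| ≤ Bf'`, `|f| ≤ Bf` on `[0, Bw]`. -/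
structure RegAssumptions (f f' : ℝ → ℝ) (Mf Bw Bf' Bf : ℝ) : Prop where
  deriv : ∀ x, HasDerivAt f (f' x) x
  strong : StrongConvexOn Set.univ Mf f
  Mf_pos : 0 < Mf
  f'_bdd : ∀ x, 0 ≤ x → x ≤ Bw → |f' x| ≤ Bf'
  f_bdd : ∀ x, 0 ≤ x → x ≤ Bw → |f x| ≤ Bf

/-- `w` is an optimal density ratio of the unregularized LP (the set `W*₀`). -/
def OptRatio (P : S → A → S → ℝ) (r : S → A → ℝ) (μ0 : S → ℝ) (γ : ℝ)
    (dD : S → A → ℝ) (w : S → A → ℝ) : Prop :=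
  (∀ s a, 0 ≤ w s a) ∧ BellmanFlow P μ0 γ (dstar dD w) ∧
  ∀ w' : S → A → ℝ, (∀ s a, 0 ≤ w' s a) → BellmanFlow P μ0 γ (dstar dD w') →
    ∑ s : S, ∑ a : A, dstar dD w' s a * r s a
      ≤ ∑ s : S, ∑ a : A, dstar dD w s a * r s a

/-!
The value of `L_α(v, w)` is affine in `v` with slope the defect of `d = w·d^D` in the Bellman flow
equations, so at the saddle point `d*` is a flow, i.e. the occupancy of `π*`.  In `w` it is
`α M_f`-strongly concave for the `L²(d^D)` norm, so a `2ε`-optimal `ŵ` lies within `2√(ε / (α M_f))`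
of `w*`.  Hoeffding's inequality and a union bound over `V × W` make the empirical Lagrangian
uniformly `ε_stat`-close to `L_α`, and then the empirical max-min point is `2 ε_stat`-optimal.

For the return, two flows differ in total variation by at most the discrepancy of their policies
plus the discrepancy of their state marginals, and the latter is at most `γ` times the former total
variation because the flow equations are a `γ`-contraction.  Renormalizing `ŵ·d^D` into a policy
costs a factor `2` in `L¹`, and Jensen's inequality passes from `L¹(d^D)` to `L²(d^D)`.
-/

/-! ### Conditionals of state-action measures -/

section Conditional

variable {S A : Type*} [Fintype A] {d e π : S → A → ℝ}

/-- `π` is a version of the conditional of the state-action measure `d` given the state, i.e.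
`d(s,a) = d(s) π(a|s)`; nothing is required of `π` in the states where `d` vanishes. -/
def HasConditional (d π : S → A → ℝ) : Prop :=
  ∀ s a, d s a = (∑ a', d s a') * π s a

theorem isPolicy_normPolicy [Nonempty A] (hd : ∀ s a, 0 ≤ d s a) : IsPolicy (normPolicy d) := by
  constructor <;> intro s <;> simp only [normPolicy] <;> split_ifs with h
  · exact fun a => div_nonneg (hd s a) h.le
  · exact fun _ => by positivity
  · rw [← Finset.sum_div, div_self h.ne']
  · simp

theorem hasConditional_normPolicy (hd : ∀ s a, 0 ≤ d s a) :
    HasConditional d (normPolicy d) := by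
  intro s a
  unfold normPolicy
  split_ifs with h
  · rw [mul_div_cancel₀ _ h.ne']
  · have hsum : ∑ a', d s a' = 0 :=
      le_antisymm (not_lt.1 h) (Finset.sum_nonneg fun a' _ => hd s a')
    rw [hsum, zero_mul]
    exact (Finset.sum_eq_zero_iff_of_nonneg fun a' _ => hd s a').1 hsum a (Finset.mem_univ a)

namespace HasConditional

theorem sum_abs_mul_sub (he : HasConditional e π) (hπ : IsPolicy π) (c : ℝ) (s : S) :
    ∑ a, |c * π s a - e s a| = |c - ∑ a, e s a| := by
  calc ∑ a, |c * π s a - e s a| = ∑ a, |c - ∑ a', e s a'| * π s a := by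
        refine Finset.sum_congr rfl fun a _ => ?_
        rw [he s a, ← sub_mul, abs_mul, abs_of_nonneg (hπ.1 s a)]
    _ = |c - ∑ a, e s a| := by rw [← Finset.mul_sum, hπ.2, mul_one]

theorem sum_abs_sub_le (he : HasConditional e π) (hπ : IsPolicy π) (d : S → A → ℝ) (s : S) :
    ∑ a, |d s a - e s a|
      ≤ ∑ a, |d s a - (∑ a', d s a') * π s a| + |∑ a, d s a - ∑ a, e s a| := by
  rw [← he.sum_abs_mul_sub hπ, ← Finset.sum_add_distrib]
  exact Finset.sum_le_sum fun a _ => abs_sub_le _ _ _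

theorem sum_abs_sub_mul_le (he : HasConditional e π) (hπ : IsPolicy π) (d : S → A → ℝ) (s : S) :
    ∑ a, |d s a - (∑ a', d s a') * π s a| ≤ 2 * ∑ a, |d s a - e s a| := by
  have hmarg : |∑ a, d s a - ∑ a, e s a| ≤ ∑ a, |d s a - e s a| := by
    rw [← Finset.sum_sub_distrib]
    exact Finset.abs_sum_le_sum_abs _ _
  calc ∑ a, |d s a - (∑ a', d s a') * π s a|
      ≤ ∑ a, (|d s a - e s a| + |(∑ a', d s a') * π s a - e s a|) :=
        Finset.sum_le_sum fun a _ => by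
          rw [abs_sub_comm (_ * π s a) (e s a)]
          exact abs_sub_le _ _ _
    _ = ∑ a, |d s a - e s a| + |∑ a, d s a - ∑ a, e s a| := by
        rw [Finset.sum_add_distrib, he.sum_abs_mul_sub hπ]
    _ ≤ 2 * ∑ a, |d s a - e s a| := by linarith

theorem expL1_eq [Fintype S] {ρ : S → A → ℝ} (h : HasConditional d ρ) (hd : ∀ s a, 0 ≤ d s a)
    (π : S → A → ℝ) :
    expL1 d ρ π = ∑ s, ∑ a, |d s a - (∑ a', d s a') * π s a| := by
  refine Finset.sum_congr rfl fun s _ => ?_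
  rw [l1Pol, Finset.mul_sum]
  refine Finset.sum_congr rfl fun a _ => ?_
  have hmarg : 0 ≤ ∑ a', d s a' := Finset.sum_nonneg fun a' _ => hd s a'
  conv_rhs => rw [h s a, ← mul_sub, abs_mul, abs_of_nonneg hmarg]

end HasConditional

end Conditional

/-! ### Bellman flows and occupancies -/

section Occupancy

variable {S A : Type*} [Fintype S] [Fintype A] {P : S → A → S → ℝ} {r : S → A → ℝ} {μ0 : S → ℝ}
  {γ : ℝ} {d e π ρ : S → A → ℝ}

namespace BellmanFlow

theorem sum_abs_sum_sub_sum_le (hP : ∀ s a, P s a ∈ stdSimplex ℝ S) (hγ : 0 ≤ γ)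
    (hd : BellmanFlow P μ0 γ d) (he : BellmanFlow P μ0 γ e) :
    ∑ s, |∑ a, d s a - ∑ a, e s a| ≤ γ * ∑ s, ∑ a, |d s a - e s a| := by
  have hdiff (s : S) : ∑ a, d s a - ∑ a, e s a
      = γ * ∑ s', ∑ a', P s' a' s * (d s' a' - e s' a') := by
    rw [hd s, he s]
    simp only [mul_sub, Finset.sum_sub_distrib]
    ring
  have hpt (s : S) : |∑ a, d s a - ∑ a, e s a|
      ≤ γ * ∑ s', ∑ a', P s' a' s * |d s' a' - e s' a'| := by
    rw [hdiff, abs_mul, abs_of_nonneg hγ]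
    refine mul_le_mul_of_nonneg_left ?_ hγ
    refine (Finset.abs_sum_le_sum_abs _ _).trans (Finset.sum_le_sum fun s' _ => ?_)
    refine (Finset.abs_sum_le_sum_abs _ _).trans (Finset.sum_le_sum fun a' _ => ?_)
    rw [abs_mul, abs_of_nonneg ((hP s' a').1 s)]
  calc ∑ s, |∑ a, d s a - ∑ a, e s a|
      ≤ ∑ s, γ * ∑ s', ∑ a', P s' a' s * |d s' a' - e s' a'| :=
        Finset.sum_le_sum fun s _ => hpt s
    _ = γ * ∑ s', ∑ a', (∑ s, P s' a' s) * |d s' a' - e s' a'| := by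
        rw [← Finset.mul_sum, Finset.sum_comm]
        simp only [Finset.sum_comm (s := Finset.univ (α := S)) (t := Finset.univ (α := A)),
          Finset.sum_mul]
    _ = γ * ∑ s, ∑ a, |d s a - e s a| := by simp only [(hP _ _).2, one_mul]

theorem sum_abs_sub_le (hP : ∀ s a, P s a ∈ stdSimplex ℝ S) (hγ0 : 0 ≤ γ) (hγ1 : γ < 1)
    (hd : BellmanFlow P μ0 γ d) (he : BellmanFlow P μ0 γ e) (hπ : IsPolicy π)
    (heπ : HasConditional e π) :
    ∑ s, ∑ a, |d s a - e s a|
      ≤ 1 / (1 - γ) * ∑ s, ∑ a, |d s a - (∑ a', d s a') * π s a| := by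
  have hmarg := hd.sum_abs_sum_sub_sum_le hP hγ0 he
  have hsplit := Finset.sum_le_sum fun s (_ : s ∈ Finset.univ) => heπ.sum_abs_sub_le hπ d s
  rw [Finset.sum_add_distrib] at hsplit
  rw [one_div, ← div_eq_inv_mul, le_div_iff₀ (sub_pos.2 hγ1)]
  linarith

theorem eq_of_hasConditional (hP : ∀ s a, P s a ∈ stdSimplex ℝ S) (hγ0 : 0 ≤ γ) (hγ1 : γ < 1)
    (hd : BellmanFlow P μ0 γ d) (he : BellmanFlow P μ0 γ e) (hπ : IsPolicy π)
    (hdπ : HasConditional d π) (heπ : HasConditional e π) : d = e := by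
  have hle := hd.sum_abs_sub_le hP hγ0 hγ1 he hπ heπ
  simp only [← hdπ _ _, sub_self, abs_zero, Finset.sum_const_zero, mul_zero] at hle
  funext s a
  have hpt : |d s a - e s a| ≤ ∑ s, ∑ a, |d s a - e s a| :=
    (Finset.single_le_sum (f := fun a => |d s a - e s a|) (fun _ _ => abs_nonneg _)
      (Finset.mem_univ a)).trans
    (Finset.single_le_sum (f := fun s => ∑ a, |d s a - e s a|)
      (fun _ _ => Finset.sum_nonneg fun _ _ => abs_nonneg _) (Finset.mem_univ s))
  exact sub_eq_zero.1 (abs_nonpos_iff.1 (hpt.trans hle))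

end BellmanFlow

theorem saDist_nonneg (hP : ∀ s a s', 0 ≤ P s a s') (hμ : ∀ s, 0 ≤ μ0 s)
    (hπ : ∀ s a, 0 ≤ π s a) (t : ℕ) (s : S) (a : A) : 0 ≤ saDist P μ0 π t s a := by
  induction t generalizing s a with
  | zero => exact mul_nonneg (hμ s) (hπ s a)
  | succ t ih =>
    exact mul_nonneg (Finset.sum_nonneg fun s' _ => Finset.sum_nonneg fun a' _ =>
      mul_nonneg (ih s' a') (hP s' a' s)) (hπ s a)

theorem sum_saDist (hP : ∀ s a, ∑ s', P s a s' = 1) (hμ : ∑ s, μ0 s = 1)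
    (hπ : ∀ s, ∑ a, π s a = 1) (t : ℕ) : ∑ s, ∑ a, saDist P μ0 π t s a = 1 := by
  induction t with
  | zero => simp only [saDist, ← Finset.mul_sum, hπ, mul_one, hμ]
  | succ t ih =>
    calc ∑ s, ∑ a, saDist P μ0 π (t + 1) s a
        = ∑ s, ∑ s', ∑ a', saDist P μ0 π t s' a' * P s' a' s := by
          simp only [saDist, ← Finset.mul_sum, hπ, mul_one]
      _ = ∑ s', ∑ a', saDist P μ0 π t s' a' * ∑ s, P s' a' s := by
          rw [Finset.sum_comm]
          simp only [Finset.sum_comm (s := Finset.univ (α := S)) (t := Finset.univ (α := A)),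
            Finset.mul_sum]
      _ = 1 := by simp only [hP, mul_one, ih]

theorem summable_pow_mul_saDist (hP : ∀ s a, P s a ∈ stdSimplex ℝ S) (hγ0 : 0 ≤ γ) (hγ1 : γ < 1)
    (hμ : μ0 ∈ stdSimplex ℝ S) (hπ : IsPolicy π) (s : S) (a : A) :
    Summable fun t => γ ^ t * saDist P μ0 π t s a := by
  have hnonneg := saDist_nonneg (fun s a => (hP s a).1) hμ.1 hπ.1
  have hle (t : ℕ) : saDist P μ0 π t s a ≤ 1 := by
    rw [← sum_saDist (fun s a => (hP s a).2) hμ.2 hπ.2 t]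
    exact (Finset.single_le_sum (f := fun a => saDist P μ0 π t s a)
      (fun a _ => hnonneg t s a) (Finset.mem_univ a)).trans
      (Finset.single_le_sum (f := fun s => ∑ a, saDist P μ0 π t s a)
        (fun s _ => Finset.sum_nonneg fun a _ => hnonneg t s a) (Finset.mem_univ s))
  exact (summable_geometric_of_lt_one hγ0 hγ1).of_nonneg_of_le
    (fun t => mul_nonneg (pow_nonneg hγ0 t) (hnonneg t s a))
    (fun t => mul_le_of_le_one_right (pow_nonneg hγ0 t) (hle t))

theorem occ_nonneg (hP : ∀ s a s', 0 ≤ P s a s') (hγ0 : 0 ≤ γ) (hγ1 : γ ≤ 1)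
    (hμ : ∀ s, 0 ≤ μ0 s) (hπ : ∀ s a, 0 ≤ π s a) (s : S) (a : A) : 0 ≤ occ P μ0 γ π s a :=
  mul_nonneg (sub_nonneg.2 hγ1) (tsum_nonneg fun t =>
    mul_nonneg (pow_nonneg hγ0 t) (saDist_nonneg hP hμ hπ t s a))

theorem occ_eq_mul (hP : ∀ s a, P s a ∈ stdSimplex ℝ S) (hγ0 : 0 ≤ γ) (hγ1 : γ < 1)
    (hμ : μ0 ∈ stdSimplex ℝ S) (hπ : IsPolicy π) (s : S) (a : A) :
    occ P μ0 γ π s a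
      = ((1 - γ) * μ0 s + γ * ∑ s', ∑ a', P s' a' s * occ P μ0 γ π s' a') * π s a := by
  have hsummable := summable_pow_mul_saDist hP hγ0 hγ1 hμ hπ
  have htail : ∑' t, γ ^ (t + 1) * saDist P μ0 π (t + 1) s a
      = γ * (∑ s', ∑ a', P s' a' s * ∑' t, γ ^ t * saDist P μ0 π t s' a') * π s a := by
    have hsum := ((hasSum_sum fun s' (_ : s' ∈ Finset.univ) =>
      hasSum_sum fun a' (_ : a' ∈ Finset.univ) =>
        (hsummable s' a').hasSum.mul_left (P s' a' s)).mul_left γ).mul_right (π s a)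
    rw [← hsum.tsum_eq]
    refine tsum_congr fun t => ?_
    simp only [saDist, Finset.mul_sum, Finset.sum_mul]
    exact Finset.sum_congr rfl fun s' _ => Finset.sum_congr rfl fun a' _ => by ring
  simp only [occ, mul_left_comm _ (1 - γ), ← Finset.mul_sum]
  rw [(hsummable s a).tsum_eq_zero_add, htail]
  simp only [saDist, pow_zero]
  ring

theorem bellmanFlow_occ (hP : ∀ s a, P s a ∈ stdSimplex ℝ S) (hγ0 : 0 ≤ γ) (hγ1 : γ < 1)
    (hμ : μ0 ∈ stdSimplex ℝ S) (hπ : IsPolicy π) : BellmanFlow P μ0 γ (occ P μ0 γ π) := by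
  intro s
  rw [Finset.sum_congr rfl fun a _ => occ_eq_mul hP hγ0 hγ1 hμ hπ s a, ← Finset.mul_sum, hπ.2,
    mul_one]

theorem hasConditional_occ (hP : ∀ s a, P s a ∈ stdSimplex ℝ S) (hγ0 : 0 ≤ γ) (hγ1 : γ < 1)
    (hμ : μ0 ∈ stdSimplex ℝ S) (hπ : IsPolicy π) : HasConditional (occ P μ0 γ π) π := by
  intro s a
  rw [bellmanFlow_occ hP hγ0 hγ1 hμ hπ s]
  exact occ_eq_mul hP hγ0 hγ1 hμ hπ s a

theorem BellmanFlow.occ_normPolicy [Nonempty A] (hP : ∀ s a, P s a ∈ stdSimplex ℝ S)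
    (hγ0 : 0 ≤ γ) (hγ1 : γ < 1) (hμ : μ0 ∈ stdSimplex ℝ S) (hd : BellmanFlow P μ0 γ d)
    (hd0 : ∀ s a, 0 ≤ d s a) : occ P μ0 γ (normPolicy d) = d := by
  have hπ := isPolicy_normPolicy hd0
  exact (bellmanFlow_occ hP hγ0 hγ1 hμ hπ).eq_of_hasConditional hP hγ0 hγ1 hd hπ
    (hasConditional_occ hP hγ0 hγ1 hμ hπ) (hasConditional_normPolicy hd0)

theorem Jret_sub_le_expL1_occ (hP : ∀ s a, P s a ∈ stdSimplex ℝ S) (hγ0 : 0 ≤ γ) (hγ1 : γ < 1)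
    (hμ : μ0 ∈ stdSimplex ℝ S) (hr : ∀ s a, |r s a| ≤ 1) (hρ : IsPolicy ρ) (hπ : IsPolicy π) :
    Jret P r μ0 γ ρ - Jret P r μ0 γ π ≤ 1 / (1 - γ) * expL1 (occ P μ0 γ ρ) ρ π := by
  have hρ0 := occ_nonneg (fun s a => (hP s a).1) hγ0 hγ1.le hμ.1 hρ.1
  calc Jret P r μ0 γ ρ - Jret P r μ0 γ π
      = ∑ s, ∑ a, (occ P μ0 γ ρ s a - occ P μ0 γ π s a) * r s a := by
        simp only [Jret, sub_mul, Finset.sum_sub_distrib]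
    _ ≤ ∑ s, ∑ a, |occ P μ0 γ ρ s a - occ P μ0 γ π s a| := by
        refine Finset.sum_le_sum fun s _ => Finset.sum_le_sum fun a _ => ?_
        refine (le_abs_self _).trans ?_
        rw [abs_mul]
        exact mul_le_of_le_one_right (abs_nonneg _) (hr s a)
    _ ≤ 1 / (1 - γ) * expL1 (occ P μ0 γ ρ) ρ π := by
        rw [(hasConditional_occ hP hγ0 hγ1 hμ hρ).expL1_eq hρ0]
        exact (bellmanFlow_occ hP hγ0 hγ1 hμ hρ).sum_abs_sub_le hP hγ0 hγ1
          (bellmanFlow_occ hP hγ0 hγ1 hμ hπ) hπ (hasConditional_occ hP hγ0 hγ1 hμ hπ)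

end Occupancy

/-! ### Policy extraction -/

section Extraction

variable {S A : Type*} [Fintype A] {dD w u : S → A → ℝ}

theorem isPolicy_extractPolicy [Nonempty A] {ρ : S → A → ℝ} (hρ : ∀ s a, 0 ≤ ρ s a)
    (hw : ∀ s a, 0 ≤ w s a) : IsPolicy (extractPolicy ρ w) :=
  isPolicy_normPolicy (d := fun s a => w s a * ρ s a) fun s a => mul_nonneg (hw s a) (hρ s a)

theorem extractPolicy_behPolicy (hdD : ∀ s a, 0 ≤ dD s a) (w : S → A → ℝ) {s : S}
    (hs : 0 < ∑ a, dD s a) (a : A) :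
    extractPolicy (behPolicy dD) w s a = normPolicy (dstar dD w) s a := by
  have hterm (a : A) : dstar dD w s a = (∑ a', dD s a') * (w s a * behPolicy dD s a) := by
    rw [dstar, behPolicy, mul_left_comm, ← hasConditional_normPolicy hdD s a]
  simp only [extractPolicy, normPolicy, hterm, ← Finset.mul_sum, mul_div_mul_left _ _ hs.ne',
    mul_pos_iff_of_pos_left hs]

theorem hasConditional_dstar_extractPolicy (hdD : ∀ s a, 0 ≤ dD s a) (hw : ∀ s a, 0 ≤ w s a) :
    HasConditional (dstar dD w) (extractPolicy (behPolicy dD) w) := by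
  intro s a
  rcases (Finset.sum_nonneg fun a (_ : a ∈ Finset.univ) => hdD s a).eq_or_lt with hs | hs
  · have hzero (a : A) : dD s a = 0 :=
      (Finset.sum_eq_zero_iff_of_nonneg fun a _ => hdD s a).1 hs.symm a (Finset.mem_univ a)
    simp [dstar, hzero]
  · rw [extractPolicy_behPolicy hdD w hs]
    exact hasConditional_normPolicy (fun s a => mul_nonneg (hw s a) (hdD s a)) s a

variable [Fintype S]

theorem expL1_extractPolicy_le_sum [Nonempty A] {ρ : S → A → ℝ} (hdD : ∀ s a, 0 ≤ dD s a)
    (hw : ∀ s a, 0 ≤ w s a) (hu : ∀ s a, 0 ≤ u s a) (hρ : HasConditional (dstar dD w) ρ) :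
    expL1 (dstar dD w) ρ (extractPolicy (behPolicy dD) u)
      ≤ 2 * ∑ s, ∑ a, dD s a * |u s a - w s a| := by
  have hπ : IsPolicy (extractPolicy (behPolicy dD) u) :=
    isPolicy_extractPolicy (isPolicy_normPolicy hdD).1 hu
  rw [hρ.expL1_eq fun s a => mul_nonneg (hw s a) (hdD s a), Finset.mul_sum]
  refine Finset.sum_le_sum fun s _ => ?_
  refine ((hasConditional_dstar_extractPolicy hdD hu).sum_abs_sub_mul_le hπ (dstar dD w) s).trans
    (le_of_eq ?_)
  congr 1
  refine Finset.sum_congr rfl fun a _ => ?_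
  rw [dstar, dstar, ← sub_mul, abs_mul, abs_of_nonneg (hdD s a), abs_sub_comm, mul_comm]

theorem l2nrm_sq (hdD : ∀ s a, 0 ≤ dD s a) (g : S → A → ℝ) :
    l2nrm dD g ^ 2 = ∑ s, ∑ a, dD s a * g s a ^ 2 :=
  Real.sq_sqrt <| Finset.sum_nonneg fun s _ => Finset.sum_nonneg fun a _ =>
    mul_nonneg (hdD s a) (sq_nonneg _)

theorem sum_mul_abs_le_l2nrm (hdD : ∀ s a, 0 ≤ dD s a) (hdD1 : ∑ s, ∑ a, dD s a = 1)
    (g : S → A → ℝ) : ∑ s, ∑ a, dD s a * |g s a| ≤ l2nrm dD g := by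
  refine Real.le_sqrt_of_sq_le ?_
  have hjensen := Real.pow_arith_mean_le_arith_mean_pow_of_even Finset.univ
    (fun x : S × A => dD x.1 x.2) (fun x => |g x.1 x.2|) (fun x _ => hdD x.1 x.2)
    (by rwa [Fintype.sum_prod_type]) even_two
  simpa only [Fintype.sum_prod_type, sq_abs] using hjensen

theorem expL1_extractPolicy_le_l2nrm [Nonempty A] {ρ : S → A → ℝ} (hdD : ∀ s a, 0 ≤ dD s a)
    (hdD1 : ∑ s, ∑ a, dD s a = 1) (hw : ∀ s a, 0 ≤ w s a) (hu : ∀ s a, 0 ≤ u s a)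
    (hρ : HasConditional (dstar dD w) ρ) :
    expL1 (dstar dD w) ρ (extractPolicy (behPolicy dD) u)
      ≤ 2 * l2nrm dD (fun s a => u s a - w s a) :=
  (expL1_extractPolicy_le_sum hdD hw hu hρ).trans
    (mul_le_mul_of_nonneg_left (sum_mul_abs_le_l2nrm hdD hdD1 _) two_pos.le)

end Extraction


/-! ### The regularized Lagrangian -/

section Lagrangian

variable {S A : Type*} [Fintype S] [Fintype A] {P : S → A → S → ℝ} {r : S → A → ℝ} {μ0 : S → ℝ}
  {γ : ℝ} {dD : S → A → ℝ} {f : ℝ → ℝ} {α M Bw ε : ℝ} {v : S → ℝ} {w u : S → A → ℝ}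

/-- The defect of a state-action measure `d` in the Bellman flow equations. It is the gradient in
`v` of the Lagrangian at `d = w·d^D`. -/
def bellmanDefect (P : S → A → S → ℝ) (μ0 : S → ℝ) (γ : ℝ) (d : S → A → ℝ) (s : S) : ℝ :=
  (1 - γ) * μ0 s + γ * ∑ s', ∑ a', P s' a' s * d s' a' - ∑ a, d s a

theorem sum_mul_bellmanDefect (P : S → A → S → ℝ) (μ0 : S → ℝ) (γ : ℝ) (d : S → A → ℝ)
    (v : S → ℝ) :
    ∑ s, v s * bellmanDefect P μ0 γ d s
      = (1 - γ) * ∑ s, μ0 s * v s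
        + ∑ s, ∑ a, d s a * (γ * ∑ s', P s a s' * v s' - v s) := by
  have hadj : ∑ s, v s * ∑ s', ∑ a', P s' a' s * d s' a'
      = ∑ s, ∑ a, d s a * ∑ s', P s a s' * v s' := by
    simp only [Finset.mul_sum]
    rw [Finset.sum_comm]
    refine Finset.sum_congr rfl fun s _ => Finset.sum_comm.trans ?_
    exact Finset.sum_congr rfl fun a _ => Finset.sum_congr rfl fun s' _ => by ring
  have hinit : ∑ s, v s * ((1 - γ) * μ0 s) = (1 - γ) * ∑ s, μ0 s * v s := by
    rw [Finset.mul_sum]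
    exact Finset.sum_congr rfl fun s _ => by ring
  have hmarg : ∑ s, v s * ∑ a, d s a = ∑ s, ∑ a, d s a * v s := by
    simp only [← Finset.sum_mul, mul_comm (v _)]
  simp only [bellmanDefect, mul_sub, mul_add, Finset.sum_sub_distrib, Finset.sum_add_distrib,
    mul_left_comm _ γ, ← Finset.mul_sum, hadj, hinit, hmarg]
  ring

theorem Lag_eq_sum_mul_bellmanDefect_add :
    Lag P r μ0 γ dD f α v w
      = ∑ s, v s * bellmanDefect P μ0 γ (dstar dD w) s
        + (∑ s, ∑ a, dstar dD w s a * r s a - α * ∑ s, ∑ a, dD s a * f (w s a)) := by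
  have hres : ∑ s, ∑ a, dD s a * (w s a * eV P r γ v s a)
      = ∑ s, ∑ a, dstar dD w s a * r s a
        + ∑ s, ∑ a, dstar dD w s a * (γ * ∑ s', P s a s' * v s' - v s) := by
    simp only [← Finset.sum_add_distrib]
    refine Finset.sum_congr rfl fun s _ => Finset.sum_congr rfl fun a _ => ?_
    rw [dstar, eV]
    ring
  rw [Lag, sum_mul_bellmanDefect, hres]
  ring

theorem bellmanFlow_of_forall_Lag_le
    (hmin : ∀ v', Lag P r μ0 γ dD f α v w ≤ Lag P r μ0 γ dD f α v' w) :
    BellmanFlow P μ0 γ (dstar dD w) := by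
  set c := bellmanDefect P μ0 γ (dstar dD w) with hc
  have hstep := hmin (v - c)
  simp only [Lag_eq_sum_mul_bellmanDefect_add, ← hc, Pi.sub_apply, sub_mul,
    Finset.sum_sub_distrib] at hstep
  have hnonneg (s : S) : 0 ≤ c s * c s := mul_self_nonneg _
  have hsum : ∑ s, c s * c s = 0 :=
    le_antisymm (by linarith) (Finset.sum_nonneg fun s _ => hnonneg s)
  intro s
  have hcs : c s = 0 := mul_self_eq_zero.1
    ((Finset.sum_eq_zero_iff_of_nonneg fun s _ => hnonneg s).1 hsum s (Finset.mem_univ s))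
  exact (sub_eq_zero.1 hcs).symm

theorem sum_mul_strongConvexOn_le {I : Set ℝ} (hf : StrongConvexOn I M f)
    (hdD : ∀ s a, 0 ≤ dD s a) (hw : ∀ s a, w s a ∈ I) (hu : ∀ s a, u s a ∈ I) {b c : ℝ}
    (hb : 0 ≤ b) (hc : 0 ≤ c) (hbc : b + c = 1) :
    ∑ s, ∑ a, dD s a * f (b * w s a + c * u s a)
      ≤ b * ∑ s, ∑ a, dD s a * f (w s a) + c * ∑ s, ∑ a, dD s a * f (u s a)
        - b * c * (M / 2 * l2nrm dD (fun s a => u s a - w s a) ^ 2) := by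
  rw [l2nrm_sq hdD]
  simp only [Finset.mul_sum, ← Finset.sum_add_distrib, ← Finset.sum_sub_distrib]
  refine Finset.sum_le_sum fun s _ => Finset.sum_le_sum fun a _ => ?_
  have hconv := hf.2 (hw s a) (hu s a) hb hc hbc
  simp only [smul_eq_mul, Real.norm_eq_abs, sq_abs] at hconv
  refine (mul_le_mul_of_nonneg_left hconv (hdD s a)).trans (le_of_eq ?_)
  ring

theorem Lag_combo_ge {I : Set ℝ} (hf : StrongConvexOn I M f) (hα : 0 ≤ α)
    (hdD : ∀ s a, 0 ≤ dD s a) (hw : ∀ s a, w s a ∈ I) (hu : ∀ s a, u s a ∈ I) {b c : ℝ}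
    (hb : 0 ≤ b) (hc : 0 ≤ c) (hbc : b + c = 1) :
    b * Lag P r μ0 γ dD f α v w + c * Lag P r μ0 γ dD f α v u
        + b * c * (α * (M / 2) * l2nrm dD (fun s a => u s a - w s a) ^ 2)
      ≤ Lag P r μ0 γ dD f α v (fun s a => b * w s a + c * u s a) := by
  have hlin : ∑ s, ∑ a, dD s a * ((b * w s a + c * u s a) * eV P r γ v s a)
      = b * ∑ s, ∑ a, dD s a * (w s a * eV P r γ v s a)
        + c * ∑ s, ∑ a, dD s a * (u s a * eV P r γ v s a) := by
    simp only [Finset.mul_sum, ← Finset.sum_add_distrib]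
    exact Finset.sum_congr rfl fun s _ => Finset.sum_congr rfl fun a _ => by ring
  have hconv := mul_le_mul_of_nonneg_left (sum_mul_strongConvexOn_le hf hdD hw hu hb hc hbc) hα
  rw [Lag, Lag, Lag, hlin]
  obtain rfl : b = 1 - c := eq_sub_of_add_eq hbc
  linarith

theorem IsSaddle.isSaddleB (h : IsSaddle P r μ0 γ dD f α v w) (hw : ∀ s a, w s a ≤ Bw) :
    IsSaddleB P r μ0 γ dD f α Bw v w :=
  ⟨fun s a => ⟨h.1 s a, hw s a⟩, h.2.1, fun w' hw' => h.2.2 w' fun s a => (hw' s a).1⟩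

theorem IsSaddleB.quadratic_growth (h : IsSaddleB P r μ0 γ dD f α Bw v w)
    (hf : StrongConvexOn (Set.Icc 0 Bw) M f) (hα : 0 ≤ α) (hdD : ∀ s a, 0 ≤ dD s a)
    (hu : ∀ s a, u s a ∈ Set.Icc 0 Bw) :
    α * (M / 2) * l2nrm dD (fun s a => u s a - w s a) ^ 2
      ≤ Lag P r μ0 γ dD f α v w - Lag P r μ0 γ dD f α v u := by
  set Q := α * (M / 2) * l2nrm dD (fun s a => u s a - w s a) ^ 2 with hQ
  have hsegment (t : ℝ) (ht0 : 0 < t) (ht1 : t < 1) :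
      (1 - t) * Q ≤ Lag P r μ0 γ dD f α v w - Lag P r μ0 γ dD f α v u := by
    have hmax := h.2.2 (fun s a => (1 - t) * w s a + t * u s a) fun s a =>
      convex_Icc 0 Bw (h.1 s a) (hu s a) (sub_nonneg.2 ht1.le) ht0.le (sub_add_cancel 1 t)
    have hcombo := Lag_combo_ge (P := P) (r := r) (μ0 := μ0) (γ := γ) (v := v) hf hα hdD h.1 hu
      (sub_nonneg.2 ht1.le) ht0.le (sub_add_cancel 1 t)
    rw [← hQ] at hcombo
    refine le_of_mul_le_mul_left ?_ ht0
    linarith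
  have hlim : Filter.Tendsto (fun t : ℝ => (1 - t) * Q) (nhdsWithin 0 (Set.Ioi 0)) (nhds Q) := by
    have hcont : Continuous fun t : ℝ => (1 - t) * Q := by fun_prop
    simpa using (hcont.tendsto 0).mono_left nhdsWithin_le_nhds
  refine le_of_tendsto hlim ?_
  filter_upwards [Ioo_mem_nhdsGT one_pos] with t ht using hsegment t ht.1 ht.2

variable {V : Finset (S → ℝ)} {W : Finset (S → A → ℝ)} {n n0 : ℕ} {D : Fin n → (S × A) × S}
  {D0 : Fin n0 → S} {vhat : S → ℝ} {what : S → A → ℝ}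

theorem IsProRLOutput.Lag_sub_le (hout : IsProRLOutput r γ f α V W D D0 vhat what)
    (hmin : ∀ v', Lag P r μ0 γ dD f α v w ≤ Lag P r μ0 γ dD f α v' w) (hv : v ∈ V) (hw : w ∈ W)
    (hε : ∀ v ∈ V, ∀ w ∈ W, |empLag r γ f α D D0 v w - Lag P r μ0 γ dD f α v w| ≤ ε) :
    Lag P r μ0 γ dD f α v w - Lag P r μ0 γ dD f α v what ≤ 2 * ε := by
  obtain ⟨-, hwhat, hvhat_min, hwhat_max⟩ := hout
  obtain ⟨v₁, hv₁, hv₁_min⟩ := V.exists_min_image (fun v' => empLag r γ f α D D0 v' w) ⟨v, hv⟩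
  have hclose₁ := abs_le.1 (hε v₁ hv₁ w hw)
  have hclose₂ := abs_le.1 (hε v hv what hwhat)
  have hemp : empLag r γ f α D D0 v₁ w ≤ empLag r γ f α D D0 v what :=
    (hwhat_max w hw v₁ hv₁ hv₁_min).trans (hvhat_min v hv)
  linarith [hmin v₁]

theorem IsProRLOutput.l2nrm_sub_le (hout : IsProRLOutput r γ f α V W D D0 vhat what)
    (hsad : IsSaddleB P r μ0 γ dD f α Bw v w) (hf : StrongConvexOn (Set.Icc 0 Bw) M f)
    (hM : 0 < M) (hα : 0 < α) (hdD : ∀ s a, 0 ≤ dD s a) (hv : v ∈ V) (hw : w ∈ W)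
    (hwhat : ∀ s a, what s a ∈ Set.Icc 0 Bw)
    (hε : ∀ v ∈ V, ∀ w ∈ W, |empLag r γ f α D D0 v w - Lag P r μ0 γ dD f α v w| ≤ ε) :
    l2nrm dD (fun s a => what s a - w s a) ≤ 2 * √(ε / (α * M)) := by
  have hgap := hout.Lag_sub_le hsad.2.1 hv hw hε
  have hgrowth := hsad.quadratic_growth hf hα.le hdD hwhat
  have hsq : (l2nrm dD (fun s a => what s a - w s a) / 2) ^ 2 ≤ ε / (α * M) := by
    rw [le_div_iff₀ (mul_pos hα hM)]
    linarith
  linarith [Real.le_sqrt_of_sq_le hsq]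

end Lagrangian

/-! ### Concentration of sample means -/

section Concentration

open ProbabilityTheory
open scoped NNReal

section Subgaussian

variable {Ω : Type*} [MeasurableSpace Ω] {ν : Measure Ω} [IsProbabilityMeasure ν] {c : ℝ≥0}
  {η : ℝ}

theorem measureReal_sqrt_log_lt_abs_le {Y : Ω → ℝ} (hY : HasSubgaussianMGF Y c ν) (hη0 : 0 < η)
    (hη1 : η ≤ 1) : ν.real {ω | √(2 * c * Real.log (2 / η)) < |Y ω|} ≤ η := by
  set t := √(2 * c * Real.log (2 / η)) with ht
  rcases eq_or_ne c 0 with rfl | hc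
  · have hzero : ν {ω | t < |Y ω|} = 0 := by
      refine measure_mono_null (fun ω hω => ?_) hY.ae_eq_zero_of_hasSubgaussianMGF_zero
      exact abs_pos.1 ((Real.sqrt_nonneg _).trans_lt hω)
    rw [Measure.real, hzero]
    exact hη0.le
  · have htail : Real.exp (-t ^ 2 / (2 * c)) = η / 2 := by
      have hlog : 0 ≤ Real.log (2 / η) := Real.log_nonneg (by rw [le_div_iff₀ hη0]; linarith)
      have hc' : (c : ℝ) ≠ 0 := NNReal.coe_ne_zero.2 hc
      rw [ht, Real.sq_sqrt (mul_nonneg (by positivity) hlog), neg_div,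
        mul_div_cancel_left₀ _ (mul_ne_zero two_ne_zero hc'), Real.exp_neg,
        Real.exp_log (by positivity), inv_div]
    calc ν.real {ω | t < |Y ω|} ≤ ν.real ({ω | t ≤ Y ω} ∪ {ω | t ≤ -Y ω}) :=
          measureReal_mono fun ω hω => by
            have habs : t < |Y ω| := hω
            exact (lt_abs.1 habs).imp le_of_lt le_of_lt
      _ ≤ η / 2 + η / 2 := by
          refine (measureReal_union_le _ _).trans (add_le_add ?_ ?_)
          · exact htail ▸ hY.measure_ge_le (Real.sqrt_nonneg _)
          · exact htail ▸ hY.neg.measure_ge_le (Real.sqrt_nonneg _)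
      _ = η := add_halves η

theorem measureReal_exists_sqrt_log_lt_abs_le {ι : Type*} {F : Finset ι} {Y : ι → Ω → ℝ}
    (hY : ∀ k ∈ F, HasSubgaussianMGF (Y k) c ν) (hη0 : 0 < η) (hη1 : η ≤ 1) :
    ν.real {ω | ∃ k ∈ F, √(2 * c * Real.log (2 * F.card / η)) < |Y k ω|} ≤ η := by
  rcases F.eq_empty_or_nonempty with rfl | hF
  · simpa using hη0.le
  have hcard : (1 : ℝ) ≤ F.card := Nat.one_le_cast.2 hF.card_pos
  have hcard0 : (0 : ℝ) < F.card := one_pos.trans_le hcard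
  have hunion : {ω | ∃ k ∈ F, √(2 * c * Real.log (2 * F.card / η)) < |Y k ω|}
      = ⋃ k ∈ F, {ω | √(2 * c * Real.log (2 / (η / F.card))) < |Y k ω|} := by
    ext ω
    simp only [Set.mem_ofPred_eq, Set.mem_iUnion, exists_prop, div_div_eq_mul_div]
  calc ν.real {ω | ∃ k ∈ F, √(2 * c * Real.log (2 * F.card / η)) < |Y k ω|}
      ≤ ∑ k ∈ F, ν.real {ω | √(2 * c * Real.log (2 / (η / F.card))) < |Y k ω|} := by
        rw [hunion]
        exact measureReal_biUnion_finset_le _ _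
    _ ≤ ∑ _k ∈ F, η / F.card := Finset.sum_le_sum fun k hk =>
        measureReal_sqrt_log_lt_abs_le (hY k hk) (div_pos hη0 hcard0)
          ((div_le_self hη0.le hcard).trans hη1)
    _ = η := by rw [Finset.sum_const, nsmul_eq_mul, mul_div_cancel₀ _ hcard0.ne']

end Subgaussian

/-- The sample mean `n⁻¹ ∑ᵢ g(xᵢ)`, the empirical counterpart of `∫ x, g x ∂μ`; it is `0` for the
empty sample. -/
noncomputable def sampleMean {X : Type*} {n : ℕ} (g : X → ℝ) (x : Fin n → X) : ℝ :=
  (n : ℝ)⁻¹ * ∑ i, g (x i)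

section Hoeffding

variable {X : Type*} [MeasurableSpace X] {μ : Measure X} [IsProbabilityMeasure μ] {B η : ℝ} {n : ℕ}

theorem hasSubgaussianMGF_sampleMean_sub_integral {g : X → ℝ} (hg : Measurable g)
    (hB : ∀ x, |g x| ≤ B) (hn : 0 < n) :
    HasSubgaussianMGF (fun x : Fin n → X => sampleMean g x - ∫ y, g y ∂μ) (‖B‖₊ ^ 2 / n)
      (Measure.pi fun _ => μ) := by
  have hn' : (n : ℝ) ≠ 0 := Nat.cast_ne_zero.2 hn.ne'
  have hwidth : (‖B - -B‖₊ / 2) ^ 2 = ‖B‖₊ ^ 2 := by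
    rw [sub_neg_eq_add, ← two_mul, nnnorm_mul, Real.nnnorm_two, mul_div_cancel_left₀ _ two_ne_zero]
  have hterm (i : Fin n) : HasSubgaussianMGF (fun x : Fin n → X => g (x i) - ∫ y, g y ∂μ)
      (‖B‖₊ ^ 2) (Measure.pi fun _ => μ) := by
    have hlemma := hasSubgaussianMGF_of_mem_Icc (μ := μ) hg.aemeasurable
      (Filter.Eventually.of_forall fun x => abs_le.1 (hB x))
    have heval := measurePreserving_eval (fun _ : Fin n => μ) i
    rw [hwidth, ← heval.map_eq] at hlemma
    simpa only [heval.map_eq, Function.comp_def] using hlemma.of_map heval.measurable.aemeasurable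
  have hindep : iIndepFun (fun (i : Fin n) (x : Fin n → X) => g (x i) - ∫ y, g y ∂μ)
      (Measure.pi fun _ => μ) :=
    iIndepFun_pi (X := fun _ x => g x - ∫ y, g y ∂μ) fun _ => (hg.sub_const _).aemeasurable
  have hmean := (HasSubgaussianMGF.sum_of_iIndepFun hindep (s := Finset.univ)
    fun i _ => hterm i).const_mul (n : ℝ)⁻¹
  convert hmean using 1
  · funext x
    rw [sampleMean, Finset.sum_sub_distrib, Finset.sum_const, Finset.card_univ, Fintype.card_fin,
      nsmul_eq_mul, mul_sub, inv_mul_cancel_left₀ hn']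
  · rw [← NNReal.coe_inj]
    change ((‖B‖₊ ^ 2 / n : ℝ≥0) : ℝ) = (n : ℝ)⁻¹ ^ 2 * ((∑ _i : Fin n, ‖B‖₊ ^ 2 : ℝ≥0) : ℝ)
    rw [Finset.sum_const, Finset.card_univ, Fintype.card_fin, nsmul_eq_mul]
    push_cast
    field_simp

theorem measureReal_exists_sampleMean_sub_integral_gt_le {ι : Type*} {F : Finset ι}
    {g : ι → X → ℝ} (hg : ∀ k ∈ F, Measurable (g k))
    (hB : ∀ k ∈ F, ∀ x, |g k x| ≤ B) (hn : 0 < n) (hη0 : 0 < η) (hη1 : η ≤ 1) :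
    (Measure.pi fun _ : Fin n => μ).real {x | ∃ k ∈ F,
      B * √(2 * Real.log (2 * F.card / η) / n) < |sampleMean (g k) x - ∫ y, g k y ∂μ|} ≤ η := by
  rcases F.eq_empty_or_nonempty with rfl | ⟨k, hk⟩
  · simpa using hη0.le
  obtain ⟨x₀⟩ : Nonempty X := nonempty_of_isProbabilityMeasure μ
  have hB0 : 0 ≤ B := (abs_nonneg _).trans (hB k hk x₀)
  have hrate : √(2 * (‖B‖₊ ^ 2 / n : ℝ≥0) * Real.log (2 * F.card / η))
      = B * √(2 * Real.log (2 * F.card / η) / n) := by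
    rw [← Real.sqrt_mul_self hB0, ← Real.sqrt_mul (mul_self_nonneg _), Real.sqrt_mul_self hB0]
    congr 1
    push_cast
    rw [Real.norm_eq_abs, sq_abs]
    ring
  simpa only [hrate] using measureReal_exists_sqrt_log_lt_abs_le
    (fun k hk => hasSubgaussianMGF_sampleMean_sub_integral (μ := μ) (hg k hk) (hB k hk) hn) hη0 hη1

end Hoeffding

section DiscMeasure

variable {X : Type*} [Fintype X] [MeasurableSpace X] {p : X → ℝ}

theorem isProbabilityMeasure_discMeasure (hp : p ∈ stdSimplex ℝ X) :
    IsProbabilityMeasure (discMeasure p) := by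
  constructor
  simp only [discMeasure, Measure.sum_fintype, Measure.coe_finsetSum, Finset.sum_apply,
    Measure.smul_apply, smul_eq_mul, measure_univ, mul_one]
  rw [← ENNReal.ofReal_sum_of_nonneg fun x _ => hp.1 x, hp.2, ENNReal.ofReal_one]

theorem integral_discMeasure [MeasurableSingletonClass X] (hp : ∀ x, 0 ≤ p x) (g : X → ℝ) :
    ∫ x, g x ∂(discMeasure p) = ∑ x, p x * g x := by
  rw [discMeasure, Measure.sum_fintype, integral_finsetSum_measure fun x _ =>
    (integrable_dirac (by simp)).smul_measure ENNReal.ofReal_ne_top]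
  refine Finset.sum_congr rfl fun x _ => ?_
  rw [integral_smul_measure, integral_dirac, ENNReal.toReal_ofReal (hp x), smul_eq_mul]

end DiscMeasure

theorem one_sub_le_measureReal_prod_compl {X Y : Type*} [MeasurableSpace X] [MeasurableSpace Y]
    (μ : Measure X) (ν : Measure Y) [IsProbabilityMeasure μ] [IsProbabilityMeasure ν]
    (s : Set X) (t : Set Y) :
    1 - (μ.real s + ν.real t) ≤ (μ.prod ν).real (sᶜ ×ˢ tᶜ) := by
  have hcover : (Set.univ : Set (X × Y)) = sᶜ ×ˢ tᶜ ∪ (s ×ˢ Set.univ ∪ Set.univ ×ˢ t) := by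
    ext ω
    simp only [Set.mem_union, Set.mem_prod, Set.mem_compl_iff, Set.mem_univ]
    tauto
  have hunion := measureReal_union_le (μ := μ.prod ν) (sᶜ ×ˢ tᶜ) (s ×ˢ Set.univ ∪ Set.univ ×ˢ t)
  have hbad := measureReal_union_le (μ := μ.prod ν) (s ×ˢ Set.univ) (Set.univ ×ˢ t)
  rw [← hcover, probReal_univ] at hunion
  rw [measureReal_prod_prod, measureReal_prod_prod, probReal_univ, probReal_univ] at hbad
  linarith

end Concentration

/-! ### Empirical and population Lagrangians -/

section Empirical

variable {S A : Type*} {P : S → A → S → ℝ} {r : S → A → ℝ} {μ0 : S → ℝ} {γ : ℝ} {dD : S → A → ℝ}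
  {f : ℝ → ℝ} {α : ℝ} {v : S → ℝ} {w : S → A → ℝ}

/-- The contribution of one transition `((s,a),s')` to the empirical Lagrangian; the remaining term
of the Lagrangian depends only on the initial states. -/
def transitionLag (r : S → A → ℝ) (γ : ℝ) (f : ℝ → ℝ) (α : ℝ) (v : S → ℝ) (w : S → A → ℝ)
    (x : (S × A) × S) : ℝ :=
  w x.1.1 x.1.2 * (r x.1.1 x.1.2 + γ * v x.2 - v x.1.1) - α * f (w x.1.1 x.1.2)

theorem abs_transitionLag_le {Bv Bf Bw : ℝ} (hr : ∀ s a, |r s a| ≤ 1) (hγ : 0 ≤ γ) (hα : 0 ≤ α)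
    (hv : ∀ s, |v s| ≤ Bv) (hw : ∀ s a, w s a ∈ Set.Icc 0 Bw)
    (hf : ∀ x ∈ Set.Icc 0 Bw, |f x| ≤ Bf) (x : (S × A) × S) :
    |transitionLag r γ f α v w x| ≤ α * Bf + Bw * ((1 + γ) * Bv + 1) := by
  obtain ⟨⟨s, a⟩, s'⟩ := x
  obtain ⟨hw0, hw1⟩ := hw s a
  have hres : |r s a + γ * v s' - v s| ≤ (1 + γ) * Bv + 1 :=
    calc |r s a + γ * v s' - v s| ≤ |r s a| + |γ * v s'| + |v s| :=
          (abs_sub _ _).trans (add_le_add_left (abs_add_le _ _) _)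
      _ ≤ 1 + γ * Bv + Bv := by
          rw [abs_mul, abs_of_nonneg hγ]
          exact add_le_add (add_le_add (hr s a) (mul_le_mul_of_nonneg_left (hv s') hγ)) (hv s)
      _ = (1 + γ) * Bv + 1 := by ring
  calc |transitionLag r γ f α v w ((s, a), s')|
      ≤ |w s a * (r s a + γ * v s' - v s)| + |α * f (w s a)| := abs_sub _ _
    _ = w s a * |r s a + γ * v s' - v s| + α * |f (w s a)| := by
        rw [abs_mul, abs_mul, abs_of_nonneg hw0, abs_of_nonneg hα]
    _ ≤ Bw * ((1 + γ) * Bv + 1) + α * Bf :=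
        add_le_add (mul_le_mul hw1 hres (abs_nonneg _) (hw0.trans hw1))
          (mul_le_mul_of_nonneg_left (hf _ (hw s a)) hα)
    _ = α * Bf + Bw * ((1 + γ) * Bv + 1) := add_comm _ _

theorem empLag_eq_sampleMean {n n0 : ℕ} (D : Fin n → (S × A) × S) (D0 : Fin n0 → S) :
    empLag r γ f α D D0 v w
      = (1 - γ) * sampleMean v D0 + sampleMean (transitionLag r γ f α v w) D := by
  simp only [empLag, sampleMean, transitionLag, Finset.sum_sub_distrib, ← Finset.mul_sum]
  ring

theorem epsStat_eq (γ α Bv Bf Bw Be δ : ℝ) (V : Finset (S → ℝ)) (W : Finset (S → A → ℝ))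
    (n n0 : ℕ) :
    epsStat γ α Bv Bf Bw Be δ V.card W.card n n0
      = (1 - γ) * (Bv * √(2 * Real.log (2 * V.card / (δ / 2)) / n0))
        + (α * Bf + Bw * Be) * √(2 * Real.log (2 * (V ×ˢ W).card / (δ / 2)) / n) := by
  have hhalf (x : ℝ) : 2 * x / (δ / 2) = 4 * x / δ := by
    rw [div_div_eq_mul_div]
    ring
  rw [epsStat, hhalf, hhalf, Finset.card_product, Nat.cast_mul, mul_assoc]

variable [Fintype S] [Fintype A]

theorem sum_tupleWeight_mul (P : S → A → S → ℝ) (dD : S → A → ℝ) (g : (S × A) × S → ℝ) :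
    ∑ x, tupleWeight P dD x * g x = ∑ s, ∑ a, dD s a * ∑ s', P s a s' * g ((s, a), s') := by
  simp only [Fintype.sum_prod_type, tupleWeight, Finset.mul_sum, mul_assoc]

theorem tupleWeight_mem_stdSimplex (hP : ∀ s a, P s a ∈ stdSimplex ℝ S)
    (hdD : ∀ s a, 0 ≤ dD s a) (hdD1 : ∑ s, ∑ a, dD s a = 1) :
    tupleWeight P dD ∈ stdSimplex ℝ ((S × A) × S) :=
  ⟨fun x => mul_nonneg (hdD _ _) ((hP _ _).1 _), by
    simpa only [mul_one, (hP _ _).2, hdD1] using sum_tupleWeight_mul P dD fun _ => 1⟩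

theorem Lag_eq_sum_tupleWeight_mul (hP : ∀ s a, ∑ s', P s a s' = 1) :
    Lag P r μ0 γ dD f α v w
      = (1 - γ) * ∑ s, μ0 s * v s
        + ∑ x, tupleWeight P dD x * transitionLag r γ f α v w x := by
  have hcond (s : S) (a : A) : ∑ s', P s a s' * transitionLag r γ f α v w ((s, a), s')
      = w s a * eV P r γ v s a - α * f (w s a) := by
    calc ∑ s', P s a s' * transitionLag r γ f α v w ((s, a), s')
        = ∑ s', (P s a s' * (w s a * (r s a - v s) - α * f (w s a))
            + w s a * γ * (P s a s' * v s')) :=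
          Finset.sum_congr rfl fun s' _ => by rw [transitionLag]; ring
      _ = w s a * eV P r γ v s a - α * f (w s a) := by
          rw [Finset.sum_add_distrib, ← Finset.sum_mul, hP, ← Finset.mul_sum, eV]
          ring
  rw [sum_tupleWeight_mul, Lag]
  simp only [hcond, mul_sub, Finset.sum_sub_distrib, mul_left_comm _ α, ← Finset.mul_sum]
  ring

theorem abs_empLag_sub_Lag_le (hP : ∀ s a, ∑ s', P s a s' = 1) (hγ : γ ≤ 1) {n n0 : ℕ}
    (D : Fin n → (S × A) × S) (D0 : Fin n0 → S) :
    |empLag r γ f α D D0 v w - Lag P r μ0 γ dD f α v w|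
      ≤ (1 - γ) * |sampleMean v D0 - ∑ s, μ0 s * v s|
        + |sampleMean (transitionLag r γ f α v w) D
            - ∑ x, tupleWeight P dD x * transitionLag r γ f α v w x| := by
  rw [empLag_eq_sampleMean, Lag_eq_sum_tupleWeight_mul hP, add_sub_add_comm, ← mul_sub]
  refine (abs_add_le _ _).trans_eq ?_
  rw [abs_mul, abs_of_nonneg (sub_nonneg.2 hγ)]

variable [MeasurableSpace S] [MeasurableSpace A] [MeasurableSingletonClass S]
  [MeasurableSingletonClass A] {Bv Bf Bw δ : ℝ} {V : Finset (S → ℝ)} {W : Finset (S → A → ℝ)}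
  {n n0 : ℕ}

theorem one_sub_le_dataMeasure_abs_empLag_sub_Lag_le (hP : ∀ s a, P s a ∈ stdSimplex ℝ S)
    (hr : ∀ s a, |r s a| ≤ 1) (hμ : μ0 ∈ stdSimplex ℝ S) (hγ0 : 0 ≤ γ) (hγ1 : γ ≤ 1)
    (hdD : ∀ s a, 0 ≤ dD s a) (hdD1 : ∑ s, ∑ a, dD s a = 1) (hα : 0 ≤ α)
    (hf : ∀ x ∈ Set.Icc 0 Bw, |f x| ≤ Bf) (hV : ∀ v ∈ V, ∀ s, |v s| ≤ Bv)
    (hW : ∀ w ∈ W, ∀ s a, w s a ∈ Set.Icc 0 Bw) (hn : 0 < n) (hn0 : 0 < n0) (hδ0 : 0 < δ)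
    (hδ1 : δ ≤ 1) :
    1 - ENNReal.ofReal δ ≤ dataMeasure P dD μ0 n n0 {ω | ∀ v ∈ V, ∀ w ∈ W,
      |empLag r γ f α ω.1 ω.2 v w - Lag P r μ0 γ dD f α v w|
        ≤ epsStat γ α Bv Bf Bw ((1 + γ) * Bv + 1) δ V.card W.card n n0} := by
  have hq := tupleWeight_mem_stdSimplex hP hdD hdD1
  have := isProbabilityMeasure_discMeasure hq
  have := isProbabilityMeasure_discMeasure hμ
  have hδ2 : δ / 2 ≤ 1 := by linarith
  have hD := measureReal_exists_sampleMean_sub_integral_gt_le (n := n) (F := V ×ˢ W)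
    (μ := discMeasure (tupleWeight P dD)) (g := fun k => transitionLag r γ f α k.1 k.2)
    (fun _ _ => measurable_of_finite _)
    (fun k hk => abs_transitionLag_le hr hγ0 hα (hV _ (Finset.mem_product.1 hk).1)
      (hW _ (Finset.mem_product.1 hk).2) hf) hn (half_pos hδ0) hδ2
  have hD0 := measureReal_exists_sampleMean_sub_integral_gt_le (n := n0) (μ := discMeasure μ0)
    (g := fun v : S → ℝ => v) (fun v _ => measurable_of_finite v) hV hn0 (half_pos hδ0) hδ2
  have hgood := (sub_le_sub_left (add_le_add hD hD0) 1).trans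
    (one_sub_le_measureReal_prod_compl _ _ _ _)
  rw [add_halves] at hgood
  rw [← ENNReal.ofReal_one, ← ENNReal.ofReal_sub _ hδ0.le]
  refine (ENNReal.ofReal_le_of_le_toReal hgood).trans (measure_mono fun ω hω => ?_)
  simp only [Set.mem_prod, Set.mem_compl_iff, Set.mem_ofPred_eq, not_exists, not_and, not_lt,
    integral_discMeasure hq.1, integral_discMeasure hμ.1] at hω
  intro v hv w hw
  rw [epsStat_eq]
  exact (abs_empLag_sub_Lag_le (fun s a => (hP s a).2) hγ1 ω.1 ω.2).trans <| add_le_add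
    (mul_le_mul_of_nonneg_left (hω.2 v hv) (sub_nonneg.2 hγ1))
    (hω.1 (v, w) (Finset.mk_mem_product hv hw))

end Empirical

namespace MDPAssumptions

variable {S A : Type*} [Fintype S] [Fintype A] {P : S → A → S → ℝ} {r : S → A → ℝ} {μ0 : S → ℝ}
  {γ : ℝ} {dD : S → A → ℝ}

theorem P_mem_stdSimplex (h : MDPAssumptions P r μ0 γ dD) (s : S) (a : A) :
    P s a ∈ stdSimplex ℝ S :=
  ⟨h.P_nonneg s a, h.P_sum s a⟩

theorem μ0_mem_stdSimplex (h : MDPAssumptions P r μ0 γ dD) : μ0 ∈ stdSimplex ℝ S :=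
  ⟨fun s => (h.μ0_pos s).le, h.μ0_sum⟩

theorem abs_r_le_one (h : MDPAssumptions P r μ0 γ dD) (s : S) (a : A) : |r s a| ≤ 1 :=
  (abs_of_nonneg (h.r_nonneg s a)).trans_le (h.r_le_one s a)

end MDPAssumptions

theorem RegAssumptions.strongConvexOn {f f' : ℝ → ℝ} {Mf Bw Bf' Bf : ℝ}
    (h : RegAssumptions f f' Mf Bw Bf' Bf) : StrongConvexOn (Set.Icc 0 Bw) Mf f :=
  ⟨convex_Icc 0 Bw, fun x _ y _ => h.strong.2 (Set.mem_univ x) (Set.mem_univ y)⟩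

theorem stmt0_general
    {S A : Type*} [Fintype S] [Fintype A] [Nonempty A]
    [MeasurableSpace S] [MeasurableSpace A]
    [MeasurableSingletonClass S] [MeasurableSingletonClass A]
    {P : S → A → S → ℝ} {r : S → A → ℝ} {μ0 : S → ℝ} {γ : ℝ} {dD : S → A → ℝ}
    (hP : ∀ s a, P s a ∈ stdSimplex ℝ S) (hr : ∀ s a, |r s a| ≤ 1) (hμ : μ0 ∈ stdSimplex ℝ S)
    (hγ0 : 0 ≤ γ) (hγ1 : γ < 1) (hdD : ∀ s a, 0 ≤ dD s a) (hdD1 : ∑ s, ∑ a, dD s a = 1)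
    {f : ℝ → ℝ} {α δ : ℝ} (hα : 0 < α) (hδ0 : 0 < δ) (hδ1 : δ ≤ 1) {Mf Bw Bf Bv : ℝ}
    (hf : StrongConvexOn (Set.Icc 0 Bw) Mf f) (hMf : 0 < Mf)
    (hBf : ∀ x ∈ Set.Icc 0 Bw, |f x| ≤ Bf)
    {vst : S → ℝ} {wst : S → A → ℝ} (hsad : IsSaddleB P r μ0 γ dD f α Bw vst wst)
    {V : Finset (S → ℝ)} {W : Finset (S → A → ℝ)} (hA2 : vst ∈ V) (hA3 : wst ∈ W)
    (hA4 : ∀ w ∈ W, ∀ s a, w s a ∈ Set.Icc 0 Bw) (hA6 : ∀ v ∈ V, ∀ s, |v s| ≤ Bv)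
    {n n0 : ℕ} (hn : 0 < n) (hn0 : 0 < n0)
    {vhat : (Fin n → (S × A) × S) × (Fin n0 → S) → S → ℝ}
    {what : (Fin n → (S × A) × S) × (Fin n0 → S) → S → A → ℝ}
    (halg : ∀ ω, IsProRLOutput r γ f α V W ω.1 ω.2 (vhat ω) (what ω)) :
    1 - ENNReal.ofReal δ ≤
      dataMeasure P dD μ0 n n0 {ω |
        Jret P r μ0 γ (normPolicy (dstar dD wst))
            - Jret P r μ0 γ (extractPolicy (behPolicy dD) (what ω))
          ≤ (1 / (1 - γ)) * expL1 (dstar dD wst) (normPolicy (dstar dD wst))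
              (extractPolicy (behPolicy dD) (what ω)) ∧
        (1 / (1 - γ)) * expL1 (dstar dD wst) (normPolicy (dstar dD wst))
            (extractPolicy (behPolicy dD) (what ω))
          ≤ (2 / (1 - γ)) * l2nrm dD (fun s a => what ω s a - wst s a) ∧
        (2 / (1 - γ)) * l2nrm dD (fun s a => what ω s a - wst s a)
          ≤ (4 / (1 - γ)) * √(epsStat γ α Bv Bf Bw ((1 + γ) * Bv + 1) δ V.card W.card n n0
              / (α * Mf)) } := by
  have hγ : 0 ≤ 1 - γ := sub_nonneg.2 hγ1.le
  have hwst (s : S) (a : A) : 0 ≤ wst s a := (hsad.1 s a).1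
  have hdst (s : S) (a : A) : 0 ≤ dstar dD wst s a := mul_nonneg (hwst s a) (hdD s a)
  refine (one_sub_le_dataMeasure_abs_empLag_sub_Lag_le hP hr hμ hγ0 hγ1.le hdD hdD1 hα.le hBf hA6
    hA4 hn hn0 hδ0 hδ1).trans (measure_mono fun ω hω => ?_)
  have hwhat (s : S) (a : A) : what ω s a ∈ Set.Icc 0 Bw := hA4 _ (halg ω).2.1 s a
  refine ⟨?_, ?_, ?_⟩
  · have hperf := Jret_sub_le_expL1_occ hP hγ0 hγ1 hμ hr (isPolicy_normPolicy hdst)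
      (isPolicy_extractPolicy (isPolicy_normPolicy hdD).1 fun s a => (hwhat s a).1)
    rwa [(bellmanFlow_of_forall_Lag_le hsad.2.1).occ_normPolicy hP hγ0 hγ1 hμ hdst] at hperf
  · have hL1 := expL1_extractPolicy_le_l2nrm hdD hdD1 hwst (fun s a => (hwhat s a).1)
      (hasConditional_normPolicy hdst)
    exact (mul_le_mul_of_nonneg_left hL1 (one_div_nonneg.2 hγ)).trans_eq (by ring)
  · have hl2 := (halg ω).l2nrm_sub_le hsad hf hMf hα hdD hA2 hA3 hwhat hω
    exact (mul_le_mul_of_nonneg_left hl2 (div_nonneg zero_le_two hγ)).trans_eq (by ring)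

/-- Theorem 1: sample complexity of learning `π*_α`. -/
theorem stmt0
    {S A : Type*} [Fintype S] [Fintype A] [Nonempty S] [Nonempty A]
    [MeasurableSpace S] [MeasurableSpace A]
    [MeasurableSingletonClass S] [MeasurableSingletonClass A]
    (P : S → A → S → ℝ) (r : S → A → ℝ) (μ0 : S → ℝ) (γ : ℝ) (dD : S → A → ℝ)
    (hMDP : MDPAssumptions P r μ0 γ dD)
    (f f' : ℝ → ℝ) (α δ : ℝ) (hα : 0 < α) (hδ0 : 0 < δ) (hδ1 : δ < 1)
    (Mf Bw Bf' Bf Bv Be : ℝ)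
    (hreg : RegAssumptions f f' Mf Bw Bf' Bf) (hfnn : ∀ x, 0 ≤ f x)
    (hBv : Bv = (α * Bf' + 1) / (1 - γ)) (hBe : Be = (1 + γ) * Bv + 1)
    (vst : S → ℝ) (wst : S → A → ℝ)
    (hsad : IsSaddle P r μ0 γ dD f α vst wst)
    (V : Finset (S → ℝ)) (W : Finset (S → A → ℝ))
    (hA1 : ∀ s a, dstar dD wst s a ≤ Bw * dD s a)
    (hA2 : vst ∈ V) (hA3 : wst ∈ W)
    (hA4 : ∀ w ∈ W, ∀ s a, 0 ≤ w s a ∧ w s a ≤ Bw)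
    (hA6 : ∀ v ∈ V, ∀ s, |v s| ≤ Bv)
    (n n0 : ℕ) (hn : 0 < n) (hn0 : 0 < n0)
    (vhat : (Fin n → (S × A) × S) × (Fin n0 → S) → S → ℝ)
    (what : (Fin n → (S × A) × S) × (Fin n0 → S) → S → A → ℝ)
    (halg : ∀ ω, IsProRLOutput r γ f α V W ω.1 ω.2 (vhat ω) (what ω)) :
    1 - ENNReal.ofReal δ ≤
      dataMeasure P dD μ0 n n0 {ω |
        Jret P r μ0 γ (normPolicy (dstar dD wst))
            - Jret P r μ0 γ (extractPolicy (behPolicy dD) (what ω))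
          ≤ (1 / (1 - γ)) * expL1 (dstar dD wst) (normPolicy (dstar dD wst))
              (extractPolicy (behPolicy dD) (what ω)) ∧
        (1 / (1 - γ)) * expL1 (dstar dD wst) (normPolicy (dstar dD wst))
            (extractPolicy (behPolicy dD) (what ω))
          ≤ (2 / (1 - γ)) * l2nrm dD (fun s a => what ω s a - wst s a) ∧
        (2 / (1 - γ)) * l2nrm dD (fun s a => what ω s a - wst s a)
          ≤ (4 / (1 - γ)) *
              Real.sqrt (epsStat γ α Bv Bf Bw Be δ V.card W.card n n0 / (α * Mf)) } := by
  subst hBe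
  exact stmt0_general hMDP.P_mem_stdSimplex hMDP.abs_r_le_one hMDP.μ0_mem_stdSimplex hMDP.γ_nonneg
    hMDP.γ_lt_one hMDP.dD_nonneg hMDP.dD_sum hα hδ0 hδ1.le hreg.strongConvexOn hreg.Mf_pos
    (fun x hx => hreg.f_bdd x hx.1 hx.2) (hsad.isSaddleB fun s a => (hA4 _ hA3 s a).2) hA2 hA3
    hA4 hA6 hn hn0 halg

end ProRL
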